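/- Let λ = (λ_1 ≤ … ≤ λ_n) be a weakly increasing sequence of positive integers, let m be a positive integer with m ≤ λ_1, and set λ⁺ = (m, λ_1, …, λ_n). Let α = (α_1, …, α_k) be a vector of non-negative integers, fix i with 1 ≤ i ≤ m, and let α⁺ = α + e_i (the vector α with α_i increased by 1). Then R_i(λ⁺, α⁺; t) = Σ_{j=1}^{i} R_j(λ, α; t) + t · Σ_{j=i+1}^{λ_1} R_j(λ, α; t). -/

import Mathlib

open Polynomial

/-- Words of length `n` over the alphabet `{1, …, k}` (encoded with `w i : Fin k`
representing the letter `(w i : ℕ) + 1`) in which the letter `c` occurs exactly `α c`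
times for each `c ∈ [k]`, and whose `i`-th letter is at most `L i`. -/
def MultisetWords {n k : ℕ} (L : Fin n → ℕ) (α : Fin k → ℕ) : Finset (Fin n → Fin k) :=
  Finset.univ.filter fun w =>
    (∀ i : Fin n, (w i : ℕ) + 1 ≤ L i) ∧
    ∀ c : Fin k, (Finset.univ.filter fun i : Fin n => w i = c).card = α c

/-- The number of ascents of a word: indices `i` with `w_i < w_{i+1}`. -/
def ascWordCount {n k : ℕ} (w : Fin n → Fin k) : ℕ :=
  (Finset.univ.filter fun i : Fin n =>
    ∃ h : (i : ℕ) + 1 < n, w i < w ⟨(i : ℕ) + 1, h⟩).card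

/-- The refined multiset rook-Eulerian polynomial `R_j(λ, α; t)`: the ascent-generating
polynomial of the words of `W(λ, α)` whose first letter is `j`. -/
noncomputable def multisetRookAt {n k : ℕ} (L : Fin (n + 1) → ℕ) (α : Fin k → ℕ)
    (j : ℕ) : Polynomial ℝ :=
  ∑ w ∈ (MultisetWords L α).filter (fun w => (w 0 : ℕ) + 1 = j), X ^ ascWordCount w

/-!
Prepending the letter `a ≤ m` to a word of `W(λ, α)` is a bijection onto the words of
`W(λ⁺, α + e_a)` with first letter `a`, and it creates a new ascent exactly when `a` is smaller than
the old first letter. Sorting the words of `W(λ, α)` by their first letter therefore gives the two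
sums, the second one weighted by `t`.
-/

section

variable {n k : ℕ}

theorem mem_multisetWords {L : Fin n → ℕ} {α : Fin k → ℕ} {w : Fin n → Fin k} :
    w ∈ MultisetWords L α ↔
      (∀ i, (w i : ℕ) + 1 ≤ L i) ∧ ∀ c, (Finset.univ.filter fun i => w i = c).card = α c := by
  simp [MultisetWords]

theorem cons_mem_multisetWords_iff {L : Fin n → ℕ} {α : Fin k → ℕ} {m : ℕ} {a : Fin k}
    {w : Fin n → Fin k} :
    (Fin.cons a w : Fin (n + 1) → Fin k) ∈
        MultisetWords (Fin.cons m L : Fin (n + 1) → ℕ) (α + Pi.single a 1) ↔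
      (a : ℕ) + 1 ≤ m ∧ w ∈ MultisetWords L α := by
  have hbound : (∀ i, ((Fin.cons a w : Fin (n + 1) → Fin k) i : ℕ) + 1 ≤
        (Fin.cons m L : Fin (n + 1) → ℕ) i) ↔
      (a : ℕ) + 1 ≤ m ∧ ∀ i, (w i : ℕ) + 1 ≤ L i := by
    simp [Fin.forall_fin_succ]
  have hcontent (c : Fin k) :
      (Finset.univ.filter fun i => (Fin.cons a w : Fin (n + 1) → Fin k) i = c).card =
          (α + Pi.single a 1 : Fin k → ℕ) c ↔
        (Finset.univ.filter fun i => w i = c).card = α c := by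
    rw [Fin.card_filter_univ_succ]
    rcases eq_or_ne a c with rfl | hac
    · simp
    · simp [hac, hac.symm]
  simp only [mem_multisetWords, hbound, hcontent, and_assoc]

theorem filter_head_eq_multisetWords_cons (L : Fin n → ℕ) (α : Fin k → ℕ) {m : ℕ} {a : Fin k}
    (ham : (a : ℕ) + 1 ≤ m) :
    (MultisetWords (Fin.cons m L : Fin (n + 1) → ℕ) (α + Pi.single a 1)).filter
        (fun v => v 0 = a) =
      (MultisetWords L α).image (Fin.cons a) := by
  ext v
  cases v using Fin.consCases with
  | cons b w =>
    rw [Finset.mem_filter, Fin.cons_zero, Finset.mem_image]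
    constructor
    · rintro ⟨hw, rfl⟩
      exact ⟨w, (cons_mem_multisetWords_iff.1 hw).2, rfl⟩
    · rintro ⟨u, hu, huw⟩
      obtain ⟨rfl, rfl⟩ := Fin.cons_inj.1 huw
      exact ⟨cons_mem_multisetWords_iff.2 ⟨ham, hu⟩, rfl⟩

theorem ascWordCount_eq_card_castSucc_lt_succ (w : Fin (n + 1) → Fin k) :
    ascWordCount w = (Finset.univ.filter fun j : Fin n => w j.castSucc < w j.succ).card := by
  simp only [ascWordCount, Finset.card_filter, Fin.sum_univ_castSucc]
  simp [Fin.succ]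

theorem ascWordCount_cons (a : Fin k) (w : Fin (n + 1) → Fin k) :
    ascWordCount (Fin.cons a w : Fin (n + 2) → Fin k) =
      ascWordCount w + if a < w 0 then 1 else 0 := by
  simp only [ascWordCount_eq_card_castSucc_lt_succ, Fin.card_filter_univ_succ _,
    Fin.castSucc_zero, ← Fin.succ_castSucc, Fin.cons_zero, Fin.cons_succ]
  split_ifs <;> rfl

theorem multisetRookAt_cons (L : Fin (n + 1) → ℕ) (α : Fin k → ℕ) {m : ℕ} {a : Fin k}
    (ham : (a : ℕ) + 1 ≤ m) :
    multisetRookAt (Fin.cons m L : Fin (n + 2) → ℕ) (α + Pi.single a 1) (a + 1) =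
      ∑ w ∈ MultisetWords L α, X ^ ascWordCount (Fin.cons a w : Fin (n + 2) → Fin k) := by
  simp only [multisetRookAt, Nat.add_right_cancel_iff, Fin.val_inj]
  rw [filter_head_eq_multisetWords_cons L α ham,
    Finset.sum_image fun _ _ _ _ h => Fin.cons_right_injective (α := fun _ => Fin k) a h]

theorem sum_multisetRookAt (L : Fin (n + 1) → ℕ) (α : Fin k → ℕ) (s : Finset ℕ) :
    ∑ j ∈ s, multisetRookAt L α j =
      ∑ w ∈ MultisetWords L α with (w 0 : ℕ) + 1 ∈ s, X ^ ascWordCount w :=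
  Finset.sum_fiberwise_eq_sum_filter _ _ _ _

theorem sum_Icc_one_multisetRookAt_eq_sum_head_le (L : Fin (n + 1) → ℕ) (α : Fin k → ℕ)
    (a : Fin k) :
    ∑ j ∈ Finset.Icc 1 ((a : ℕ) + 1), multisetRookAt L α j =
      ∑ w ∈ MultisetWords L α with w 0 ≤ a, X ^ ascWordCount w := by
  rw [sum_multisetRookAt]
  congr! 2 with w
  simp

theorem sum_Icc_multisetRookAt_eq_sum_lt_head (L : Fin (n + 1) → ℕ) (α : Fin k → ℕ) (a : Fin k) :
    ∑ j ∈ Finset.Icc ((a : ℕ) + 1 + 1) (L 0), multisetRookAt L α j =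
      ∑ w ∈ MultisetWords L α with a < w 0, X ^ ascWordCount w := by
  rw [sum_multisetRookAt]
  congr 1
  refine Finset.filter_congr fun w hw => ?_
  have hw0 : (w 0 : ℕ) + 1 ≤ L 0 := (mem_multisetWords.1 hw).1 0
  rw [Finset.mem_Icc, Fin.lt_def]
  omega

end

theorem multisetRookAt_recursion_general (n k : ℕ) (L : Fin (n + 1) → ℕ) (m : ℕ)
    (α : Fin k → ℕ) (i : ℕ) (hi : 1 ≤ i) (him : i ≤ m) (hik : i ≤ k) :
    multisetRookAt (Fin.cases m (fun j => L j) : Fin (n + 2) → ℕ)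
        (fun c => if (c : ℕ) + 1 = i then α c + 1 else α c) i =
      (∑ j ∈ Finset.Icc 1 i, multisetRookAt L α j)
        + X * ∑ j ∈ Finset.Icc (i + 1) (L 0), multisetRookAt L α j := by
  obtain ⟨a, rfl⟩ : ∃ a : Fin k, i = (a : ℕ) + 1 :=
    ⟨⟨i - 1, by omega⟩, (Nat.sub_add_cancel hi).symm⟩
  have hL : (Fin.cases m (fun j => L j) : Fin (n + 2) → ℕ) = Fin.cons m L := rfl
  have hα : (fun c : Fin k => if (c : ℕ) + 1 = a + 1 then α c + 1 else α c) =
      α + Pi.single a 1 := by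
    ext c
    simp only [Nat.add_right_cancel_iff, Fin.val_inj, Pi.add_apply, Pi.single_apply]
    split_ifs <;> rfl
  rw [hL, hα, multisetRookAt_cons L α him, sum_Icc_one_multisetRookAt_eq_sum_head_le,
    sum_Icc_multisetRookAt_eq_sum_lt_head, Finset.mul_sum,
    ← Finset.sum_filter_add_sum_filter_not _ (fun w => w 0 ≤ a)]
  simp only [not_le]
  congr 1 <;> refine Finset.sum_congr rfl fun w hw => ?_
  · rw [ascWordCount_cons, if_neg (Finset.mem_filter.1 hw).2.not_gt, add_zero]
  · rw [ascWordCount_cons, if_pos (Finset.mem_filter.1 hw).2, pow_succ']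

/-- For a weakly increasing sequence `λ = (λ_1 ≤ … ≤ λ_n)` of positive integers,
a positive integer `m ≤ λ_1`, `λ⁺ = (m, λ_1, …, λ_n)`, a content vector `α`, and
`1 ≤ i ≤ m` with `α⁺ = α + e_i`:
`R_i(λ⁺, α⁺; t) = Σ_{j=1}^{i} R_j(λ, α; t) + t · Σ_{j=i+1}^{λ_1} R_j(λ, α; t)`. -/
theorem multisetRookAt_recursion (n k : ℕ) (L : Fin (n + 1) → ℕ) (hmono : Monotone L)
    (hpos : ∀ i, 0 < L i) (m : ℕ) (hm : 0 < m) (hm' : m ≤ L 0)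
    (α : Fin k → ℕ) (i : ℕ) (hi : 1 ≤ i) (him : i ≤ m) (hik : i ≤ k) :
    multisetRookAt (Fin.cases m (fun j => L j) : Fin (n + 2) → ℕ)
        (fun c => if (c : ℕ) + 1 = i then α c + 1 else α c) i =
      (∑ j ∈ Finset.Icc 1 i, multisetRookAt L α j)
        + X * ∑ j ∈ Finset.Icc (i + 1) (L 0), multisetRookAt L α j :=
  multisetRookAt_recursion_general n k L m α i hi him hik
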